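/- arXiv:math/9707203 — 4 statements merged into one kernel-verified Lean document; each statement's English description precedes it below -/
import Mathlib

section
/- For every infinite partial order L, |L| ≤ 2^{μ(L)}. -/
universe u v w

open Cardinal

/-- A well-ordered chain: a chain whose induced strict order is well-founded. -/
def IsWellChain {L : Type u} [PartialOrder L] (A : Set L) : Prop :=
  IsChain (· ≤ ·) A ∧ A.WellFoundedOn (· < ·)

/-- A co-well-ordered chain: a chain well-ordered under the reverse order. -/
def IsCoWellChain {L : Type u} [PartialOrder L] (A : Set L) : Prop :=
  IsChain (· ≤ ·) A ∧ A.WellFoundedOn (· > ·)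

/-- A subset of a partial order is uniform if it is an antichain, a well-ordered chain,
or a co-well-ordered chain. -/
def IsUniform {L : Type u} [PartialOrder L] (A : Set L) : Prop :=
  IsAntichain (· ≤ ·) A ∨ IsWellChain A ∨ IsCoWellChain A

/-- `mu L` is the least cardinal `m` such that `L` has no uniform subset of cardinality `m`. -/
noncomputable def mu (L : Type u) [PartialOrder L] : Cardinal.{u} :=
  sInf {m : Cardinal.{u} | ¬ ∃ A : Set L, IsUniform A ∧ #A = m}

/-- `nu2 L₁ L₂` is the least cardinal `n` such that there is no family of `n` pairwise
incomparable monotone functions from `L₁` to `L₂` (functions ordered pointwise). -/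
noncomputable def nu2 (L₁ : Type u) (L₂ : Type v) [PartialOrder L₁] [PartialOrder L₂] :
    Cardinal.{max u v} :=
  sInf {n : Cardinal.{max u v} |
    ¬ ∃ S : Set (L₁ → L₂), (∀ f ∈ S, Monotone f) ∧ IsAntichain (· ≤ ·) S ∧ #S = n}

/-- `nu L = nu2 L L`. -/
noncomputable def nu (L : Type u) [PartialOrder L] : Cardinal.{u} := nu2 L L

/-- `muInf L = sup_{n} mu (Lⁿ)` for `n ≥ 1`. -/
noncomputable def muInf (L : Type u) [PartialOrder L] : Cardinal.{u} :=
  ⨆ n : ℕ, mu (Fin (n + 1) → L)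

/-- `nuInf L = sup_{n} nu (Lⁿ, L)` for `n ≥ 1`. -/
noncomputable def nuInf (L : Type u) [PartialOrder L] : Cardinal.{u} :=
  ⨆ n : ℕ, nu2 (Fin (n + 1) → L) L

/-- A function `(Fin n → L) → L` is a polynomial function if it lies in the smallest
sublattice of the function lattice containing all coordinate projections and all
constant functions. -/
def IsPolynomialFn (L : Type u) [Lattice L] (n : ℕ) (f : (Fin n → L) → L) : Prop :=
  f ∈ latticeClosure ({g : (Fin n → L) → L | ∃ i : Fin n, g = fun x => x i} ∪
    {g : (Fin n → L) → L | ∃ c : L, g = fun _ => c})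

/-- A lattice is order polynomially complete if for every `n ≥ 1` every monotone
`n`-ary function is a polynomial function. -/
def OPC (L : Type u) [Lattice L] : Prop :=
  ∀ n : ℕ, 1 ≤ n → ∀ f : (Fin n → L) → L, Monotone f → IsPolynomialFn L n f

/-- The three possible comparison types between distinct blocks of a canonical family. -/
inductive CompType : Type
  | lt
  | gt
  | incomp

/-- The relation on `L` associated to a comparison type. -/
def CompType.rel {L : Type u} [PartialOrder L] : CompType → L → L → Prop
  | .lt, a, b => a < b
  | .gt, a, b => b < a
  | .incomp, a, b => ¬ a ≤ b ∧ ¬ b ≤ a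

/-- A family of subsets of `L` is canonical if each member is uniform, all members are
of the same type, and comparison between elements of distinct members depends only on
the pair of indices. -/
def IsCanonical {L : Type u} [PartialOrder L] {ι : Type v} (A : ι → Set L) : Prop :=
  ((∀ i, IsAntichain (· ≤ ·) (A i)) ∨ (∀ i, IsWellChain (A i)) ∨ (∀ i, IsCoWellChain (A i))) ∧
  ∃ F : ι → ι → CompType, ∀ i j, i ≠ j → ∀ a ∈ A i, ∀ b ∈ A j, (F i j).rel a b

/-!
Colour each pair of points of `L` by how they compare, and fix a well-ordered index set `ι` of
size `mu L`. Each point `x` traces a branch `ι → L` by well-founded recursion: the `i`-th node is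
a chosen point, different from all earlier nodes, that has the same colours as `x` with respect to
them. Because the choice depends only on these colours, `x` is determined by its sequence of
colours and an index at which its branch reaches `x`. If `L` has more than `2 ^ mu L` points,
there are too few such codes, so some branch `z` never reaches its point `x`. Then `z` is
injective, and `z i` compares with every later `z j` as it does with `x`. So the nodes below `x`
form a well-ordered chain, those above `x` a co-well-ordered chain, and the others an antichain.
As `mu L` is infinite, these three uniform sets of size less than `mu L` cannot exhaust `mu L`
nodes.
-/

section EndHomogeneous

variable {α : Type u} {γ : Type v} {ι : Type w} [LinearOrder ι]

/-- A sequence `z` is end-homogeneous, with end point `x`, for the colouring `c` of ordered pairs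
if the colour of `(z i, z j)` with `i < j` depends only on `i`, being the colour of `(z i, x)`. -/
def IsEndHomogeneous (c : α → α → γ) (x : α) (z : ι → α) : Prop :=
  ∀ ⦃i j : ι⦄, i < j → c (z i) (z j) = c (z i) x

/-- The branch of the Erdős–Rado partition tree leading to `x`: each node is a chosen point that
differs from all earlier nodes and has the same colours as `x` with respect to them. Once `x` itself
has been reached there may be no such point, and the nodes are then arbitrary. -/
noncomputable def branch [WellFoundedLT ι] (c : α → α → γ) (x : α) (i : ι) : α :=
  @Classical.epsilon α ⟨x⟩ fun y =>
    ∀ j < i, branch c x j ≠ y ∧ c (branch c x j) y = c (branch c x j) x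
termination_by wellFounded_lt.wrap i

variable [WellFoundedLT ι]

theorem branch_spec {c : α → α → γ} {x : α} {i j : ι} (hx : ∀ k < i, branch c x k ≠ x)
    (hji : j < i) :
    branch c x j ≠ branch c x i ∧ c (branch c x j) (branch c x i) = c (branch c x j) x := by
  have hnode := @Classical.epsilon_spec_aux α ⟨x⟩
    (fun y => ∀ k < i, branch c x k ≠ y ∧ c (branch c x k) y = c (branch c x k) x)
    ⟨x, fun k hk => ⟨hx k hk, rfl⟩⟩
  rw [← branch.eq_def] at hnode
  exact hnode j hji

theorem branch_injective {c : α → α → γ} {x : α} (hx : ∀ i : ι, branch c x i ≠ x) :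
    Function.Injective (branch c x : ι → α) :=
  .of_lt_imp_ne fun _ _ hij => (branch_spec (fun k _ => hx k) hij).1

theorem isEndHomogeneous_branch {c : α → α → γ} {x : α} (hx : ∀ i : ι, branch c x i ≠ x) :
    IsEndHomogeneous c x (branch c x : ι → α) :=
  fun _ _ hij => (branch_spec (fun k _ => hx k) hij).2

theorem branch_eq_of_color_eq {c : α → α → γ} {x y : α}
    (h : ∀ i : ι, c (branch c x i) x = c (branch c y i) y) (i : ι) :
    branch c x i = branch c y i := by
  induction i using WellFoundedLT.induction with
  | ind i ih =>
    rw [branch.eq_def c x, branch.eq_def c y]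
    congr! 5 with a j hj
    · rw [ih j hj]
    · rw [ih j hj, ← h j, ih j hj]

theorem exists_injective_isEndHomogeneous (c : α → α → γ)
    (hcode : IsEmpty (α ↪ (ι → γ) × ι)) :
    ∃ (x : α) (z : ι → α), Function.Injective z ∧ IsEndHomogeneous c x z := by
  suffices ∃ x, ∀ i : ι, branch c x i ≠ x by
    obtain ⟨x, hx⟩ := this
    exact ⟨x, branch c x, branch_injective hx, isEndHomogeneous_branch hx⟩
  by_contra! hreach
  choose index hreach using hreach
  refine hcode.false ⟨fun x => (fun i => c (branch c x i) x, index x), fun x y hxy => ?_⟩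
  obtain ⟨hcolor, hindex⟩ := Prod.mk.inj hxy
  calc x = branch c x (index x) := (hreach x).symm
    _ = branch c y (index y) := by rw [hindex, branch_eq_of_color_eq (congrFun hcolor)]
    _ = y := hreach y

end EndHomogeneous

section Uniform

variable {L : Type u} [PartialOrder L]

theorem IsUniform.mono {A B : Set L} (hB : IsUniform B) (hAB : A ⊆ B) : IsUniform A :=
  hB.imp (·.subset hAB) <| .imp (fun h => ⟨h.1.mono hAB, h.2.subset hAB⟩)
    (fun h => ⟨h.1.mono hAB, h.2.subset hAB⟩)

theorem IsUniform.mk_lt_mu {A : Set L} (hA : IsUniform A) : #A < mu L := by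
  have hunattained : {m : Cardinal.{u} | ¬ ∃ A : Set L, IsUniform A ∧ #A = m}.Nonempty := by
    refine ⟨Order.succ #L, ?_⟩
    rintro ⟨B, -, hB⟩
    exact (Order.lt_succ #L).not_ge (hB ▸ mk_set_le B)
  by_contra! hle
  obtain ⟨B, hBA, hB⟩ := le_mk_iff_exists_subset.1 hle
  exact csInf_mem hunattained ⟨B, hA.mono hBA, hB⟩

theorem mk_lt_mu_of_isUniform_image {ι : Type u} {z : ι → L} {s : Set ι}
    (hz : Function.Injective z) (hs : IsUniform (z '' s)) : #s < mu L :=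
  mk_image_eq hz ▸ hs.mk_lt_mu

variable {ι : Type v} [LinearOrder ι] {z : ι → L} {s : Set ι}

theorem isWellChain_image [WellFoundedLT ι] (hz : StrictMonoOn z s) : IsWellChain (z '' s) := by
  refine ⟨?_, Set.wellFoundedOn_image.2 ?_⟩
  · rintro _ ⟨i, hi, rfl⟩ _ ⟨j, hj, rfl⟩ -
    exact (le_total i j).imp (hz.monotoneOn hi hj) (hz.monotoneOn hj hi)
  · exact (wellFounded_lt.wellFoundedOn (s := s)).mono' fun i hi j hj => (hz.lt_iff_lt hi hj).1

theorem isCoWellChain_image [WellFoundedLT ι] (hz : StrictAntiOn z s) :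
    IsCoWellChain (z '' s) := by
  refine ⟨?_, Set.wellFoundedOn_image.2 ?_⟩
  · rintro _ ⟨i, hi, rfl⟩ _ ⟨j, hj, rfl⟩ -
    exact (le_total j i).imp (hz.antitoneOn hj hi) (hz.antitoneOn hi hj)
  · exact (wellFounded_lt.wellFoundedOn (s := s)).mono' fun i hi j hj => (hz.lt_iff_gt hj hi).1

theorem isAntichain_image (hz : ∀ i ∈ s, ∀ j ∈ s, i < j → ¬ z i < z j ∧ ¬ z j < z i) :
    IsAntichain (· ≤ ·) (z '' s) := by
  rintro _ ⟨i, hi, rfl⟩ _ ⟨j, hj, rfl⟩ hne hle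
  have hlt : z i < z j := hle.lt_of_ne hne
  rcases lt_trichotomy i j with hij | rfl | hji
  · exact (hz i hi j hj hij).1 hlt
  · exact hne rfl
  · exact (hz j hj i hi hji).2 hlt

theorem exists_infinite_isUniform [Infinite L] : ∃ A : Set L, A.Infinite ∧ IsUniform A := by
  obtain ⟨z, hz⟩ := Infinite.natEmbedding L
  suffices ∃ g : ℕ ↪o ℕ, IsUniform ((z ∘ g) '' Set.univ) by
    obtain ⟨g, hg⟩ := this
    exact ⟨_, Set.infinite_univ.image (hz.comp g.injective).injOn, hg⟩
  obtain ⟨g, hlt | hnlt⟩ := exists_increasing_or_nonincreasing_subseq (· < ·) z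
  · exact ⟨g, .inr <| .inl <| isWellChain_image fun i _ j _ hij => hlt i j hij⟩
  obtain ⟨h, hgt | hngt⟩ := exists_increasing_or_nonincreasing_subseq (· > ·) (z ∘ g)
  · exact ⟨h.trans g, .inr <| .inr <| isCoWellChain_image fun i _ j _ hij => hgt i j hij⟩
  · exact ⟨h.trans g, .inl <| isAntichain_image fun i _ j _ hij =>
      ⟨hnlt _ _ (h.strictMono hij), hngt i j hij⟩⟩

theorem aleph0_lt_mu [Infinite L] : ℵ₀ < mu L := by
  obtain ⟨A, hAinf, hA⟩ := exists_infinite_isUniform (L := L)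
  exact (infinite_iff.1 hAinf.to_subtype).trans_lt hA.mk_lt_mu

end Uniform

section Comparison

variable {L : Type u} [PartialOrder L] {ι : Type v} [LinearOrder ι]

/-- The colouring of pairs by order comparison, encoded by the truth values of `a < b` and `b < a`;
equal and incomparable points get the same colour. -/
def comparison (a b : L) : Prop × Prop := (a < b, b < a)

theorem IsEndHomogeneous.lt_iff {x : L} {z : ι → L} (hz : IsEndHomogeneous comparison x z)
    {i j : ι} (hij : i < j) : z i < z j ↔ z i < x :=
  iff_of_eq (congrArg Prod.fst (hz hij))

theorem IsEndHomogeneous.gt_iff {x : L} {z : ι → L} (hz : IsEndHomogeneous comparison x z)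
    {i j : ι} (hij : i < j) : z j < z i ↔ x < z i :=
  iff_of_eq (congrArg Prod.snd (hz hij))

theorem mk_lt_mu_of_isEndHomogeneous {ι : Type u} [LinearOrder ι] [WellFoundedLT ι] {x : L}
    {z : ι → L} (hinj : Function.Injective z) (hz : IsEndHomogeneous comparison x z)
    (hμ : ℵ₀ ≤ mu L) : #ι < mu L := by
  let below : Set ι := {i | z i < x}
  let above : Set ι := {i | x < z i}
  have hbelow : IsUniform (z '' below) :=
    .inr <| .inl <| isWellChain_image fun i hi j _ hij => (hz.lt_iff hij).2 hi
  have habove : IsUniform (z '' above) :=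
    .inr <| .inr <| isCoWellChain_image fun i hi j _ hij => (hz.gt_iff hij).2 hi
  have hrest : IsUniform (z '' (below ∪ above)ᶜ) :=
    .inl <| isAntichain_image fun i hi j _ hij =>
      ⟨fun h => hi <| .inl <| (hz.lt_iff hij).1 h, fun h => hi <| .inr <| (hz.gt_iff hij).1 h⟩
  calc #ι = #(below ∪ above : Set ι) + #((below ∪ above)ᶜ : Set ι) := (mk_sum_compl _).symm
    _ ≤ #below + #above + #((below ∪ above)ᶜ : Set ι) := by gcongr; exact mk_union_le _ _
    _ < mu L :=
      add_lt_of_lt hμ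
        (add_lt_of_lt hμ (mk_lt_mu_of_isUniform_image hinj hbelow)
          (mk_lt_mu_of_isUniform_image hinj habove))
        (mk_lt_mu_of_isUniform_image hinj hrest)

end Comparison

theorem mk_arrow_prod_le_two_power {ι : Type u} {γ : Type v} [Infinite ι]
    (hγ : lift.{u} #γ ≤ lift.{v} #ι) : #((ι → γ) × ι) ≤ 2 ^ lift.{v} #ι := by
  have hι : ℵ₀ ≤ lift.{v} #ι := aleph0_le_lift.2 (aleph0_le_mk ι)
  calc
    #((ι → γ) × ι) = lift.{u} #γ ^ lift.{v} #ι * lift.{v} #ι := by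
      rw [mk_prod, mk_arrow, lift_umax.{u, v}, lift_id'.{u, max u v}]
    _ ≤ (2 ^ lift.{v} #ι) ^ lift.{v} #ι * 2 ^ lift.{v} #ι := by
      gcongr
      · exact power_le_power_right (hγ.trans (cantor _).le)
      · exact (cantor _).le
    _ = 2 ^ lift.{v} #ι := by rw [← power_mul, ← power_add, mul_eq_self hι, add_eq_self hι]

/-- For every infinite partial order `L`, `|L| ≤ 2^{μ(L)}`. -/
theorem card_le_two_pow_mu (L : Type u) [PartialOrder L] [Infinite L] :
    #L ≤ 2 ^ mu L := by
  by_contra! hlt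
  have hμ : ℵ₀ ≤ mu L := aleph0_lt_mu.le
  let ι := (mu L).ord.ToType
  have hι : #ι = mu L := mk_ord_toType _
  have : Infinite ι := infinite_iff.2 (hι ▸ hμ)
  have hcodes : #((ι → Prop × Prop) × ι) ≤ 2 ^ mu L := by
    have := mk_arrow_prod_le_two_power (ι := ι) (γ := Prop × Prop)
      ((lift_lt_aleph0.2 (lt_aleph0_of_finite _)).le.trans (by simp))
    rwa [lift_uzero, hι] at this
  have hcode : IsEmpty (L ↪ (ι → Prop × Prop) × ι) :=
    ⟨fun f => (hcodes.trans_lt hlt).not_ge f.cardinal_le⟩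
  obtain ⟨x, z, hinj, hz⟩ := exists_injective_isEndHomogeneous comparison hcode
  exact (mk_lt_mu_of_isEndHomogeneous hinj hz hμ).ne hι
end

section
/- Let L be a partial order and κ a strong limit cardinal. Then: κ ≤ μ(L) if and only if κ ≤ |L|; moreover |L| > κ implies μ(L) > κ, and μ(L) = κ implies |L| = κ. -/
universe u v w

open Cardinal

/-!
Color a pair `(a, b)` by the truth values of `a ≤ b` and `b ≤ a`. As in the proof of the
Erdős–Rado theorem, each `x : L` steers a transfinite sequence in which every new term gets the same
colors from the earlier terms as `x` does. If every sequence of length `m` meets its own `x`, then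
`x` is coded by the position `j < m` of the meeting and the colors seen before `j`, so that
`#L ≤ m * 4 ^< m`. Otherwise some sequence of length `m` never meets its `x`; in it the color of a
pair depends only on the first entry, so it splits into four monochromatic, hence uniform, pieces,
and one of them has cardinality at least a quarter of `m`. For a strong limit `κ`, the product
`m * 4 ^< m` is less than `κ` if `m < κ`, and equals `κ` if `m = κ`.
-/

section EndHomogeneous

variable {α : Type u} {C : Type v} {J : Type w}

/-- The end-homogeneous sequence steered by `x`: its `j`-th term is a chosen `y` which, for the
coloring `c`, has the same colors as `x` from all earlier terms. Such a `y` always exists, namely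
`x` itself. The choice depends only on these colors, not on `x`. -/
noncomputable def endHomogeneousSeq [LT J] [WellFoundedLT J] (c : α → α → C) (x : α) (j : J) : α :=
  haveI : Nonempty α := ⟨x⟩
  Classical.epsilon fun y => ∀ i, (_ : i < j) →
    c (endHomogeneousSeq c x i) y = c (endHomogeneousSeq c x i) x
termination_by wellFounded_lt.wrap j

theorem endHomogeneousSeq_color_eq [LT J] [WellFoundedLT J] (c : α → α → C) (x : α) {i j : J}
    (hij : i < j) :
    c (endHomogeneousSeq c x i) (endHomogeneousSeq c x j) = c (endHomogeneousSeq c x i) x := by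
  conv_lhs => rw [endHomogeneousSeq.eq_def c x j]
  exact Classical.epsilon_spec (p := fun y => ∀ i, i < j →
    c (endHomogeneousSeq c x i) y = c (endHomogeneousSeq c x i) x) ⟨x, fun _ _ => rfl⟩ i hij

theorem endHomogeneousSeq_congr [Preorder J] [WellFoundedLT J] (c : α → α → C) {x y : α} (j : J)
    (hxy : ∀ i < j, c (endHomogeneousSeq c x i) x = c (endHomogeneousSeq c y i) y) :
    endHomogeneousSeq c x j = endHomogeneousSeq c y j := by
  induction j using WellFoundedLT.induction with
  | ind j ih =>
    have earlier_eq (i : J) (hi : i < j) : endHomogeneousSeq c x i = endHomogeneousSeq c y i :=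
      ih i hi fun k hk => hxy k (hk.trans hi)
    rw [endHomogeneousSeq.eq_def c x j, endHomogeneousSeq.eq_def c y j]
    congr 1
    funext z
    refine propext (forall₂_congr fun i hi => ?_)
    rw [hxy i hi, earlier_eq i hi]

theorem exists_embedding_of_forall_mem_range_endHomogeneousSeq [Preorder J] [WellFoundedLT J]
    (c : α → α → C) (h : ∀ x, x ∈ Set.range (endHomogeneousSeq (J := J) c x)) :
    Nonempty (α ↪ Σ j : J, (Set.Iio j → C)) := by
  choose pos seq_pos using h
  let code (x : α) : Σ j : J, (Set.Iio j → C) :=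
    ⟨pos x, fun i => c (endHomogeneousSeq c x i.1) x⟩
  have apply_eq_of_eq : ∀ s t : Σ j : J, (Set.Iio j → C), s = t →
      ∀ i (hs : i < s.1) (ht : i < t.1), s.2 ⟨i, hs⟩ = t.2 ⟨i, ht⟩ := by
    rintro s _ rfl i _ _
    rfl
  refine ⟨code, fun x y hxy => ?_⟩
  have pos_eq : pos x = pos y := congrArg Sigma.fst hxy
  calc
    x = endHomogeneousSeq c x (pos x) := (seq_pos x).symm
    _ = endHomogeneousSeq c y (pos x) := endHomogeneousSeq_congr c (pos x) fun i hi =>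
      apply_eq_of_eq (code x) (code y) hxy i hi (hi.trans_eq pos_eq)
    _ = endHomogeneousSeq c y (pos y) := by rw [pos_eq]
    _ = y := seq_pos y

theorem exists_endHomogeneous_embedding [LinearOrder J] [WellFoundedLT J] (c : α → α → C)
    (hc : ∀ a b, c a a = c a b → a = b) (h : IsEmpty (α ↪ Σ j : J, (Set.Iio j → C))) :
    ∃ (f : J ↪ α) (g : J → C), ∀ i j, i < j → c (f i) (f j) = g i := by
  obtain ⟨x, hx⟩ : ∃ x, x ∉ Set.range (endHomogeneousSeq (J := J) c x) := by
    by_contra! h_range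
    exact not_nonempty_iff.2 h
      (exists_embedding_of_forall_mem_range_endHomogeneousSeq c h_range)
  have seq_ne (i j : J) (hij : i < j) : endHomogeneousSeq c x i ≠ endHomogeneousSeq c x j := by
    intro h_eq
    have color_eq := endHomogeneousSeq_color_eq c x hij
    rw [← h_eq] at color_eq
    exact hx ⟨i, hc _ _ color_eq⟩
  exact ⟨⟨endHomogeneousSeq c x, .of_lt_imp_ne seq_ne⟩,
    fun i => c (endHomogeneousSeq c x i) x, fun _ _ => endHomogeneousSeq_color_eq c x⟩

end EndHomogeneous

theorem mk_sigma_Iio_toType_arrow_le (m : Cardinal.{u}) (C : Type v) :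
    #(Σ j : m.ord.ToType, (Set.Iio j → C)) ≤ lift.{v} m * (lift.{u} #C ^< lift.{v} m) := by
  have fiber_le (j : m.ord.ToType) : #(Set.Iio j → C) ≤ lift.{u} #C ^< lift.{v} m := by
    rw [mk_arrow]
    exact le_powerlt _ (lift_lt.2 ((mk_Iio_lt j (by simp)).trans_eq (mk_ord_toType m)))
  calc
    #(Σ j : m.ord.ToType, (Set.Iio j → C))
      = Cardinal.sum fun j : m.ord.ToType => #(Set.Iio j → C) := mk_sigma _
    _ ≤ Cardinal.sum fun _ : m.ord.ToType => lift.{u} #C ^< lift.{v} m := sum_le_sum _ _ fiber_le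
    _ = lift.{v} m * (lift.{u} #C ^< lift.{v} m) := by
      rw [sum_const, mk_ord_toType, lift_umax.{u, v}, lift_id'.{u, v}]

theorem exists_lift_mk_le_mul_lift_mk_preimage {α : Type u} {β : Type v} [Finite β] [Nonempty β]
    (f : α → β) : ∃ b, lift.{v} #α ≤ lift.{u} #β * lift.{v} #(f ⁻¹' {b}) := by
  obtain ⟨b, hb⟩ := Finite.exists_max fun b => #(f ⁻¹' {b})
  exact ⟨b, lift_mk_le_lift_mk_mul_of_lift_mk_preimage_le f fun b' => lift_le.2 (hb b')⟩

theorem power_lt_of_isStrongLimit {κ a b : Cardinal.{u}} (hκ : κ.IsStrongLimit) (ha : a < κ)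
    (hb : b < κ) : a ^ b < κ := by
  calc
    a ^ b ≤ (2 ^ a) ^ b := power_le_power_right (cantor a).le
    _ = 2 ^ (a * b) := power_mul.symm
    _ < κ := hκ.isStrongPrelimit (mul_lt_of_lt hκ.aleph0_le ha hb)

section PartialOrder

variable {L : Type u} [PartialOrder L]

theorem IsUniform.subset {A B : Set L} (hA : IsUniform A) (hBA : B ⊆ A) : IsUniform B := by
  rcases hA with hA | ⟨h_chain, h_wf⟩ | ⟨h_chain, h_wf⟩
  · exact Or.inl (hA.subset hBA)
  · exact Or.inr (Or.inl ⟨h_chain.mono hBA, h_wf.subset hBA⟩)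
  · exact Or.inr (Or.inr ⟨h_chain.mono hBA, h_wf.subset hBA⟩)

/-- The color of a pair `(a, b)` in a partial order: the truth values of `a ≤ b` and `b ≤ a`.
An injective well-ordered sequence whose increasing pairs share one color has uniform range. -/
def orderColor (a b : L) : Prop × Prop := (a ≤ b, b ≤ a)

theorem eq_of_orderColor_self_eq {a b : L} (h : orderColor a a = orderColor a b) : a = b := by
  obtain ⟨h_le, h_ge⟩ := Prod.ext_iff.1 h
  exact le_antisymm (h_le.mp le_rfl) (h_ge.mp le_rfl)

section Range

variable {J : Type v} [LinearOrder J]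

theorem isWellChain_range_of_strictMono [WellFoundedLT J] {f : J → L} (hf : StrictMono f) :
    IsWellChain (Set.range f) := by
  refine ⟨hf.monotone.isChain_range, Set.wellFoundedOn_range.2 ?_⟩
  exact wellFounded_lt.mono fun _ _ => hf.lt_iff_lt.1

theorem isCoWellChain_range_of_strictAnti [WellFoundedLT J] {f : J → L} (hf : StrictAnti f) :
    IsCoWellChain (Set.range f) := by
  refine ⟨hf.antitone.isChain_range, Set.wellFoundedOn_range.2 ?_⟩
  exact wellFounded_lt.mono fun _ _ => hf.lt_iff_gt.1

theorem isAntichain_range_of_lt {f : J → L} (hf : ∀ i j, i < j → ¬ f i ≤ f j ∧ ¬ f j ≤ f i) :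
    IsAntichain (· ≤ ·) (Set.range f) := by
  rintro _ ⟨i, rfl⟩ _ ⟨j, rfl⟩ hne
  rcases lt_trichotomy i j with hij | rfl | hji
  · exact (hf i j hij).1
  · exact absurd rfl hne
  · exact (hf j i hji).2

theorem isUniform_range_of_orderColor_eq [WellFoundedLT J] {f : J → L} (hf : f.Injective)
    {q : Prop × Prop} (hq : ∀ i j, i < j → orderColor (f i) (f j) = q) :
    IsUniform (Set.range f) := by
  have le_iff (i j : J) (hij : i < j) : f i ≤ f j ↔ q.1 :=
    iff_of_eq (congrArg Prod.fst (hq i j hij))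
  have ge_iff (i j : J) (hij : i < j) : f j ≤ f i ↔ q.2 :=
    iff_of_eq (congrArg Prod.snd (hq i j hij))
  by_cases h_le : q.1
  · exact Or.inr (Or.inl (isWellChain_range_of_strictMono fun i j hij =>
      ((le_iff i j hij).2 h_le).lt_of_ne (hf.ne hij.ne)))
  by_cases h_ge : q.2
  · exact Or.inr (Or.inr (isCoWellChain_range_of_strictAnti fun i j hij =>
      ((ge_iff i j hij).2 h_ge).lt_of_ne (hf.ne hij.ne')))
  · exact Or.inl (isAntichain_range_of_lt fun i j hij =>
      ⟨mt (le_iff i j hij).1 h_le, mt (ge_iff i j hij).1 h_ge⟩)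

end Range

theorem exists_isUniform_le_four_mul_mk {m : Cardinal.{u}} (hm : m * (4 ^< m) < #L) :
    ∃ A : Set L, IsUniform A ∧ m ≤ 4 * #A := by
  have mk_color : #(Prop × Prop) = 4 := by
    simp only [mk_prod, lift_id, mk_Prop]
    norm_num
  have no_code : IsEmpty (L ↪ Σ j : m.ord.ToType, (Set.Iio j → Prop × Prop)) := by
    refine not_nonempty_iff.1 fun h => hm.not_ge ((le_def _ _).2 h |>.trans ?_)
    simpa [mk_color] using mk_sigma_Iio_toType_arrow_le m (Prop × Prop)
  obtain ⟨f, g, hfg⟩ :=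
    exists_endHomogeneous_embedding orderColor (fun _ _ => eq_of_orderColor_self_eq) no_code
  obtain ⟨q, hq⟩ := exists_lift_mk_le_mul_lift_mk_preimage g
  have f_injective : Function.Injective fun j : g ⁻¹' {q} => f j :=
    f.injective.comp Subtype.val_injective
  refine ⟨Set.range fun j : g ⁻¹' {q} => f j, isUniform_range_of_orderColor_eq f_injective
    fun i j hij => (hfg i j hij).trans i.2, ?_⟩
  rw [mk_range_eq _ f_injective]
  simpa [mk_color] using hq

theorem lt_mu_iff {m : Cardinal.{u}} : m < mu L ↔ ∃ A : Set L, IsUniform A ∧ m ≤ #A := by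
  constructor
  · intro h
    obtain ⟨A, hA, rfl⟩ := not_not.1 (notMem_of_lt_csInf' h)
    exact ⟨A, hA, le_rfl⟩
  · rintro ⟨A, hA, hmA⟩
    have nonempty : {m : Cardinal.{u} | ¬ ∃ A : Set L, IsUniform A ∧ #A = m}.Nonempty := by
      refine ⟨Order.succ #L, ?_⟩
      rintro ⟨B, -, hB⟩
      exact (Order.lt_succ #L).not_ge (hB ▸ mk_set_le B)
    by_contra! h
    obtain ⟨B, hBA, hB⟩ := le_mk_iff_exists_subset.1 (h.trans hmA)
    exact csInf_mem nonempty ⟨B, hA.subset hBA, hB⟩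

theorem mu_le_succ_mk : mu L ≤ Order.succ #L := by
  refine le_of_forall_lt fun m hm => Order.lt_succ_iff.2 ?_
  obtain ⟨A, -, hmA⟩ := lt_mu_iff.1 hm
  exact hmA.trans (mk_set_le A)

theorem le_mu_of_isStrongLimit {κ : Cardinal.{u}} (hκ : κ.IsStrongLimit) (h : κ ≤ #L) :
    κ ≤ mu L := by
  refine le_of_forall_lt fun l hl => lt_mu_iff.2 ?_
  have four_lt : 4 < κ := ofNat_lt_aleph0.trans_le hκ.aleph0_le
  have four_mul_lt : 4 * l < κ := mul_lt_of_lt hκ.aleph0_le four_lt hl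
  have powerlt_lt : 4 ^< Order.succ (4 * l) < κ := by
    rw [powerlt_succ four_ne_zero]
    exact power_lt_of_isStrongLimit hκ four_lt four_mul_lt
  obtain ⟨A, hA, h_card⟩ := exists_isUniform_le_four_mul_mk
    ((mul_lt_of_lt hκ.aleph0_le (hκ.isSuccLimit.succ_lt four_mul_lt) powerlt_lt).trans_le h)
  exact ⟨A, hA, (lt_of_mul_lt_mul_left' (Order.succ_le_iff.1 h_card)).le⟩

theorem lt_mu_of_isStrongLimit {κ : Cardinal.{u}} (hκ : κ.IsStrongLimit) (h : κ < #L) :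
    κ < mu L := by
  have four_lt : 4 < κ := ofNat_lt_aleph0.trans_le hκ.aleph0_le
  have mul_powerlt_lt : κ * (4 ^< κ) < #L := by
    calc
      κ * (4 ^< κ) ≤ κ * κ := by
        gcongr
        exact powerlt_le.2 fun a ha => (power_lt_of_isStrongLimit hκ four_lt ha).le
      _ = κ := mul_eq_self hκ.aleph0_le
      _ < #L := h
  obtain ⟨A, hA, h_card⟩ := exists_isUniform_le_four_mul_mk mul_powerlt_lt
  refine lt_mu_iff.2 ⟨A, hA, le_of_not_gt fun hAκ => h_card.not_gt ?_⟩
  exact mul_lt_of_lt hκ.aleph0_le four_lt hAκ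

theorem le_mk_of_le_mu_of_isSuccPrelimit {κ : Cardinal.{u}} (hκ : Order.IsSuccPrelimit κ)
    (h : κ ≤ mu L) : κ ≤ #L := by
  by_contra! hL
  exact (h.trans mu_le_succ_mk).not_gt (hκ.succ_lt hL)

end PartialOrder

/-- For a strong limit cardinal `κ` and a partial order `L`: `κ ≤ μ(L) ↔ κ ≤ |L|`;
moreover `|L| > κ` implies `μ(L) > κ`, and `μ(L) = κ` implies `|L| = κ`. -/
theorem mu_strong_limit (L : Type u) [PartialOrder L] (κ : Cardinal.{u})
    (hκ : κ.IsStrongLimit) :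
    (κ ≤ mu L ↔ κ ≤ #L) ∧ (κ < #L → κ < mu L) ∧ (mu L = κ → #L = κ) := by
  have le_mu_iff : κ ≤ mu L ↔ κ ≤ #L :=
    ⟨le_mk_of_le_mu_of_isSuccPrelimit hκ.isSuccPrelimit, le_mu_of_isStrongLimit hκ⟩
  have lt_mu : κ < #L → κ < mu L := lt_mu_of_isStrongLimit hκ
  refine ⟨le_mu_iff, lt_mu, fun mu_eq => le_antisymm ?_ (le_mu_iff.1 mu_eq.ge)⟩
  exact le_of_not_gt fun hL => (lt_mu hL).ne' mu_eq
end

section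
/- Let L and B be partial orders, let (A_i)_{i<λ} be a family of pairwise disjoint subsets of L whose union A = ⋃_{i<λ} A_i is an antichain in L. If κ_i < ν(A_i, B) for every i < λ, then ν(A, B) > ∏_{i<λ} κ_i. -/
/-! Monotone functions on a disjoint sum of orders `Σ i, P i` are exactly the tuples of monotone
functions on the summands, compared componentwise. So if `S i` is an antichain of monotone
functions `P i → B`, all choices from `∏ i, S i` glue to pairwise incomparable monotone functions:
`s ≤ t` forces `s i ≤ t i`, hence `s i = t i`, in every component. A union of mutually
incomparable blocks is order isomorphic to the disjoint sum of the blocks. -/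

universe u v w

open Cardinal

section Nu2

variable {L₁ : Type u} {L₂ : Type v} [PartialOrder L₁] [PartialOrder L₂]

theorem exists_antichain_of_lt_nu2 {n : Cardinal.{max u v}} (h : n < nu2 L₁ L₂) :
    ∃ S : Set (L₁ → L₂), (∀ f ∈ S, Monotone f) ∧ IsAntichain (· ≤ ·) S ∧ #S = n :=
  not_not.mp (notMem_of_lt_csInf' h)

variable (L₁ L₂) in
theorem not_exists_antichain_mk_eq_nu2 :
    ¬ ∃ S : Set (L₁ → L₂), (∀ f ∈ S, Monotone f) ∧ IsAntichain (· ≤ ·) S ∧ #S = nu2 L₁ L₂ := by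
  refine csInf_mem (s := {n | ¬ ∃ S : Set (L₁ → L₂), (∀ f ∈ S, Monotone f) ∧
    IsAntichain (· ≤ ·) S ∧ #S = n}) ⟨Order.succ #(L₁ → L₂), ?_⟩
  rintro ⟨S, -, -, hS⟩
  exact (Order.lt_succ #(L₁ → L₂)).not_ge (hS ▸ mk_set_le S)

theorem mk_lt_nu2 {S : Set (L₁ → L₂)} (hmono : ∀ f ∈ S, Monotone f)
    (hanti : IsAntichain (· ≤ ·) S) : #S < nu2 L₁ L₂ := by
  by_contra! hle
  obtain ⟨T, hTS, hT⟩ := le_mk_iff_exists_subset.mp hle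
  exact not_exists_antichain_mk_eq_nu2 L₁ L₂
    ⟨T, fun f hf => hmono f (hTS hf), hanti.subset hTS, hT⟩

theorem lift_mk_lt_lift_nu2 {α : Type w} {f : α → L₁ → L₂} (hmono : ∀ a, Monotone (f a))
    (hf : ∀ a b, f a ≤ f b → a = b) : lift.{max u v} #α < lift.{w} (nu2 L₁ L₂) := by
  have hanti : IsAntichain (· ≤ ·) (Set.range f) := by
    rintro _ ⟨a, rfl⟩ _ ⟨b, rfl⟩ hne hle
    exact hne (congrArg f (hf a b hle))
  have hinj : Function.Injective f := fun a b hab => hf a b hab.le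
  rw [← mk_range_eq_of_injective hinj, lift_lt]
  exact mk_lt_nu2 (Set.forall_mem_range.mpr hmono) hanti

end Nu2

theorem lift_nu2_le_of_surjective {L₁ : Type u} {L₂ : Type w} {B : Type v} [PartialOrder L₁]
    [PartialOrder L₂] [PartialOrder B] {g : L₂ → L₁} (hg : Monotone g)
    (hsurj : Function.Surjective g) : lift.{max v w} (nu2 L₁ B) ≤ lift.{max u v} (nu2 L₂ B) := by
  refine le_of_forall_lt fun n hn => ?_
  obtain ⟨m, hm, rfl⟩ := lt_lift_iff.mp hn
  obtain ⟨S, hmono, hanti, rfl⟩ := exists_antichain_of_lt_nu2 hm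
  have hreflect : ∀ s t : S, s.1 ∘ g ≤ t.1 ∘ g → s = t := fun s t hst =>
    Subtype.ext (hanti.eq s.2 t.2 (hsurj.forall.mpr hst))
  exact lift_mk_lt_lift_nu2 (fun s : S => (hmono s s.2).comp hg) hreflect

theorem prod_lt_nu2_sigma {ι : Type w} {P : ι → Type u} {B : Type v} [∀ i, PartialOrder (P i)]
    [PartialOrder B] {κ : ι → Cardinal.{max u v}} (hκ : ∀ i, κ i < nu2 (P i) B) :
    prod κ < nu2 (Σ i, P i) B := by
  choose S hmono hanti hcard using fun i => exists_antichain_of_lt_nu2 (hκ i)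
  let glue (s : ∀ i, S i) (x : Σ i, P i) : B := (s x.1).1 x.2
  have glue_mono (s : ∀ i, S i) : Monotone (glue s) := by
    rintro _ _ ⟨i, a, b, hab⟩
    exact hmono i _ (s i).2 hab
  have glue_reflect (s t : ∀ i, S i) (hst : glue s ≤ glue t) : s = t :=
    funext fun i => Subtype.ext ((hanti i).eq (s i).2 (t i).2 fun a => hst ⟨i, a⟩)
  have hlt := lift_mk_lt_lift_nu2 glue_mono glue_reflect
  rwa [lift_id, lift_id, mk_pi, funext hcard] at hlt

section Incomparable

variable {L : Type u} [PartialOrder L] {ι : Type w} {A : ι → Set L}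

theorem pairwise_disjoint_of_incomparable
    (hA : Pairwise fun i j => ∀ a ∈ A i, ∀ b ∈ A j, ¬ a ≤ b) :
    Pairwise (Function.onFun Disjoint A) :=
  fun _ _ hij => Set.disjoint_left.mpr fun a hi hj => hA hij a hi a hj le_rfl

theorem monotone_unionEqSigmaOfDisjoint
    (hA : Pairwise fun i j => ∀ a ∈ A i, ∀ b ∈ A j, ¬ a ≤ b) :
    Monotone (Set.unionEqSigmaOfDisjoint (pairwise_disjoint_of_incomparable hA)) := by
  set e := Set.unionEqSigmaOfDisjoint (pairwise_disjoint_of_incomparable hA)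
  have hle : ∀ p q : Σ i, A i, p.2.1 ≤ q.2.1 → p ≤ q := by
    rintro ⟨i, a⟩ ⟨j, b⟩ hab
    obtain rfl : i = j := by_contra fun hij => hA hij a a.2 b b.2 hab
    exact Sigma.le_def.mpr ⟨rfl, hab⟩
  have hval : ∀ x, (e x).2.1 = x.1 := fun x => congrArg Subtype.val (e.symm_apply_apply x)
  intro x y hxy
  exact hle _ _ (by rwa [hval, hval])

theorem independence_nu2_prod_general {B : Type v} [PartialOrder B]
    (hA : Pairwise fun i j => ∀ a ∈ A i, ∀ b ∈ A j, ¬ a ≤ b)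
    {κ : ι → Cardinal.{max u v}} (hκ : ∀ i, κ i < nu2 (A i) B) :
    prod κ < lift.{w} (nu2 (⋃ i, A i : Set L) B) := by
  have hle := lift_nu2_le_of_surjective (B := B) (monotone_unionEqSigmaOfDisjoint hA)
    (Equiv.surjective _)
  rw [lift_id', lift_umax.{max u v, w}] at hle
  exact (prod_lt_nu2_sigma hκ).trans_le hle

end Incomparable

/-- Independence lemma, part 5: for a pairwise disjoint family `(A_i)_{i<λ}` whose union
is an antichain, if `κ_i < ν(A_i, B)` for all `i`, then `ν(⋃ A_i, B) > ∏ κ_i`. -/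
theorem independence_nu2_prod (L : Type u) (B : Type u) [PartialOrder L] [PartialOrder B]
    {ι : Type u} (A : ι → Set L) (hdisj : Pairwise (Function.onFun Disjoint A))
    (hanti : IsAntichain (· ≤ ·) (⋃ i, A i))
    (κ : ι → Cardinal.{u}) (hκ : ∀ i, κ i < nu2 (↥(A i)) B) :
    Cardinal.prod κ < nu2 (↥(⋃ i, A i)) B := by
  have hA : Pairwise fun i j => ∀ a ∈ A i, ∀ b ∈ A j, ¬ a ≤ b := fun i j hij a ha b hb =>
    hanti (Set.mem_iUnion_of_mem i ha) (Set.mem_iUnion_of_mem j hb) ((hdisj hij).ne_of_mem ha hb)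
  simpa only [lift_id] using independence_nu2_prod_general hA hκ
end

section
/- Let L be a partial order and A ⊆ L a uniform subset with |A| = κ ≥ ℵ₀. Then ν(A) > 2^κ; that is, there exists a family of 2^κ pairwise incomparable monotone functions from A to A (with the induced order). -/
universe u v w

open Cardinal

/-!
A poset with as many non-maximal points as points, in which every point `x` has a successor
`x⁺` (the least element above `x`, or `x` itself when `x` is maximal), carries many monotone
self-maps: for every set `s`, moving exactly the points of `s` up to their successors is monotone,
because `x < y` already gives `x⁺ ≤ y`. On sets of non-maximal points, pointwise comparison of
these maps is inclusion of sets, so an antichain of `2 ^ κ` sets yields an antichain of `2 ^ κ`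
monotone maps. Such an antichain of sets is formed by the sets `s ⊔ sᶜ` in two disjoint copies of
the base set, since inclusion between complements reverses inclusion. Well-ordered chains have
successors and at most one maximal point, co-well-ordered chains are their order duals, and on an
antichain all `κ ^ κ = 2 ^ κ` self-maps are monotone and pairwise incomparable.
-/

section HasAntichain

/-- `HasAntichain P c` says that `P` contains `c` pairwise incomparable elements. With
`P = (L₁ →o L₂)` these are the families of monotone functions counted by `nu2 L₁ L₂`. -/
def HasAntichain (P : Type u) [LE P] (c : Cardinal.{u}) : Prop :=
  ∃ S : Set P, IsAntichain (· ≤ ·) S ∧ #S = c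

theorem HasAntichain.of_family {P ι : Type u} [Preorder P] (f : ι → P)
    (hf : ∀ i j, f i ≤ f j → i = j) : HasAntichain P #ι := by
  refine ⟨Set.range f, ?_, Cardinal.mk_range_eq f fun i j h => hf i j h.le⟩
  rintro _ ⟨i, rfl⟩ _ ⟨j, rfl⟩ hne hle
  exact hne (congrArg f (hf i j hle))

variable {P : Type u} [LE P] {c d : Cardinal.{u}}

theorem HasAntichain.map {Q : Type u} [LE Q] (f : P ↪o Q) :
    HasAntichain P c → HasAntichain Q c := by
  rintro ⟨S, hS, rfl⟩
  exact ⟨f '' S, hS.image_embedding f, Cardinal.mk_image_eq f.injective⟩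

theorem HasAntichain.dual : HasAntichain P c → HasAntichain Pᵒᵈ c := by
  rintro ⟨S, hS, rfl⟩
  exact ⟨S, hS.to_dual, rfl⟩

theorem HasAntichain.mono (hcd : c ≤ d) : HasAntichain P d → HasAntichain P c := by
  rintro ⟨S, hS, rfl⟩
  obtain ⟨T, hTS, rfl⟩ := Cardinal.le_mk_iff_exists_subset.1 hcd
  exact ⟨T, hS.subset hTS, rfl⟩

theorem HasAntichain.le_mk : HasAntichain P c → c ≤ #P := by
  rintro ⟨S, -, rfl⟩
  exact Cardinal.mk_set_le S

theorem lt_sInf_not_hasAntichain_iff : c < sInf {n | ¬ HasAntichain P n} ↔ HasAntichain P c := by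
  refine ⟨fun h => not_not.1 (notMem_of_lt_csInf' h), fun h => lt_of_not_ge fun hle => ?_⟩
  have hne : {n | ¬ HasAntichain P n}.Nonempty :=
    ⟨Order.succ #P, fun hP => (Order.lt_succ #P).not_ge hP.le_mk⟩
  exact csInf_mem hne (h.mono hle)

theorem hasAntichain_set (α : Type u) [Infinite α] : HasAntichain (Set α) (2 ^ #α) := by
  obtain ⟨e⟩ : Nonempty (α ⊕ α ≃ α) := Cardinal.eq.1 (by simp)
  let φ : Set α × Set α ≃o Set α := Set.sumEquiv.symm.trans e.toOrderIsoSet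
  rw [← Cardinal.mk_set]
  refine .of_family (fun s => φ (s, sᶜ)) fun s t h => ?_
  obtain ⟨hst, hts⟩ := Prod.mk_le_mk.1 (φ.le_iff_le.1 h)
  exact hst.antisymm (Set.compl_subset_compl.1 hts)

end HasAntichain

section OrderHom

variable {L₁ : Type u} {L₂ : Type v} [Preorder L₁] [Preorder L₂] {c : Cardinal.{max u v}}

theorem hasAntichain_orderHom_iff :
    HasAntichain (L₁ →o L₂) c ↔
      ∃ S : Set (L₁ → L₂), (∀ f ∈ S, Monotone f) ∧ IsAntichain (· ≤ ·) S ∧ #S = c := by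
  constructor
  · rintro ⟨S, hS, rfl⟩
    refine ⟨(⇑) '' S, ?_, hS.image _ fun _ _ h => h, Cardinal.mk_image_eq DFunLike.coe_injective⟩
    rintro _ ⟨f, -, rfl⟩
    exact f.monotone
  · rintro ⟨S, hmono, hS, rfl⟩
    exact .of_family (fun f : S => (⟨f, hmono f f.2⟩ : L₁ →o L₂))
      fun f g h => Subtype.ext (hS.eq f.2 g.2 h)

theorem HasAntichain.orderHom_of_orderDual (h : HasAntichain (L₁ᵒᵈ →o L₂ᵒᵈ) c) :
    HasAntichain (L₁ →o L₂) c :=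
  h.dual.map (OrderHom.dualIso L₁ L₂).symm.toOrderEmbedding

end OrderHom

theorem lt_nu2_iff {L₁ : Type u} {L₂ : Type v} [PartialOrder L₁] [PartialOrder L₂]
    {c : Cardinal.{max u v}} : c < nu2 L₁ L₂ ↔ HasAntichain (L₁ →o L₂) c := by
  simp only [nu2, ← hasAntichain_orderHom_iff, lt_sInf_not_hasAntichain_iff]

theorem hasAntichain_orderHom_of_isAntichain {α : Type u} [Preorder α]
    (h : IsAntichain (· ≤ ·) (Set.univ : Set α)) : HasAntichain (α →o α) (#α ^ #α) := by
  have eq_of_le {x y : α} (hxy : x ≤ y) : x = y := h.eq trivial trivial hxy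
  exact .of_family (fun f : α → α => (⟨f, fun x y hxy => (congrArg f (eq_of_le hxy)).le⟩ : α →o α))
    fun f g hfg => funext fun x => eq_of_le (hfg x)

section SuccOrder

variable {α : Type u} [PartialOrder α] [SuccOrder α]

open Classical in
/-- The monotone self-map that moves the points of `s` to their successors and fixes all others. -/
noncomputable def succOn (s : Set α) : α →o α where
  toFun := s.piecewise Order.succ id
  monotone' x y hxy := by
    have le_map (z : α) : z ≤ s.piecewise Order.succ id z :=
      Set.le_piecewise (fun i _ => Order.le_succ i) (fun _ _ => le_rfl) z
    have map_le_succ (z : α) : s.piecewise Order.succ id z ≤ Order.succ z :=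
      Set.piecewise_le (fun _ _ => le_rfl) (fun i _ => Order.le_succ i) z
    rcases hxy.eq_or_lt with rfl | hlt
    · exact le_rfl
    · exact (map_le_succ x).trans ((Order.succ_le_of_lt hlt).trans (le_map y))

theorem succOn_le_succOn_iff {s t : Set α} :
    succOn s ≤ succOn t ↔ ∀ x ∈ s, ¬ IsMax x → x ∈ t := by
  classical
  refine forall_congr' fun x => ?_
  change s.piecewise Order.succ id x ≤ t.piecewise Order.succ id x ↔ _
  by_cases hs : x ∈ s <;> by_cases ht : x ∈ t <;>
    simp [hs, ht, Order.le_succ, -not_isMax_iff]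

variable (α) in
/-- `succOn` as an order embedding of the powerset of the non-maximal points. Maximal points are
excluded because `succOn s` does not depend on which of them belong to `s`. -/
noncomputable def succOnEmbedding : Set {x : α // ¬ IsMax x} ↪o (α →o α) :=
  .ofMapLEIff (fun s => succOn (Subtype.val '' s)) fun s t => by
    simp only [succOn_le_succOn_iff, Set.forall_mem_image, Subtype.val_injective.mem_set_image]
    exact forall₂_congr fun x _ => forall_prop_of_true x.2

theorem hasAntichain_orderHom_of_succOrder [Infinite α] (hmax : #{x : α | IsMax x} < #α) :
    HasAntichain (α →o α) (2 ^ #α) := by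
  have hcard : #{x : α // ¬ IsMax x} = #α := Cardinal.mk_compl_of_infinite _ hmax
  have : Infinite {x : α // ¬ IsMax x} :=
    Cardinal.infinite_iff.2 (hcard ▸ Cardinal.aleph0_le_mk α)
  exact hcard ▸ (hasAntichain_set {x : α // ¬ IsMax x}).map (succOnEmbedding α)

end SuccOrder

theorem hasAntichain_orderHom_of_wellFoundedLT (α : Type u) [LinearOrder α] [WellFoundedLT α]
    [Infinite α] : HasAntichain (α →o α) (2 ^ #α) := by
  have := SuccOrder.ofLinearWellFoundedLT α
  have hsub : {x : α | IsMax x}.Subsingleton := fun x hx y hy =>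
    (hy.isTop x).antisymm (hx.isTop y)
  refine hasAntichain_orderHom_of_succOrder ?_
  exact (Cardinal.mk_le_one_iff_set_subsingleton.2 hsub).trans_lt
    (Cardinal.one_lt_aleph0.trans_le (Cardinal.aleph0_le_mk α))

section IsUniform

variable {L : Type u} [PartialOrder L] {A : Set L} [Infinite A]

theorem hasAntichain_orderHom_coe_of_isAntichain (hA : IsAntichain (· ≤ ·) A) :
    HasAntichain (A →o A) (2 ^ #A) := by
  rw [← Cardinal.power_self_eq (Cardinal.aleph0_le_mk A)]
  exact hasAntichain_orderHom_of_isAntichain (isAntichain_coe_univ_iff.2 hA)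

theorem IsWellChain.hasAntichain_orderHom (hA : IsWellChain A) :
    HasAntichain (A →o A) (2 ^ #A) := by
  classical
  let := hA.1.linearOrder
  have : WellFoundedLT A := ⟨hA.2⟩
  exact hasAntichain_orderHom_of_wellFoundedLT A

theorem IsCoWellChain.hasAntichain_orderHom (hA : IsCoWellChain A) :
    HasAntichain (A →o A) (2 ^ #A) := by
  classical
  let := hA.1.linearOrder
  have : WellFoundedLT (↥A)ᵒᵈ := ⟨hA.2⟩
  have : Infinite (↥A)ᵒᵈ := ‹Infinite A›
  exact (hasAntichain_orderHom_of_wellFoundedLT (↥A)ᵒᵈ).orderHom_of_orderDual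

theorem IsUniform.hasAntichain_orderHom : IsUniform A → HasAntichain (A →o A) (2 ^ #A)
  | .inl hA => hasAntichain_orderHom_coe_of_isAntichain hA
  | .inr (.inl hA) => hA.hasAntichain_orderHom
  | .inr (.inr hA) => hA.hasAntichain_orderHom

end IsUniform

/-- If `A ⊆ L` is uniform with `|A| = κ ≥ ℵ₀`, then `ν(A) > 2^κ`: there are `2^κ` pairwise
incomparable monotone functions from `A` to `A`. -/
theorem nu_uniform_gt_two_pow (L : Type u) [PartialOrder L] (A : Set L) (hA : IsUniform A)
    (κ : Cardinal.{u}) (hκ : ℵ₀ ≤ κ) (hcard : #↥A = κ) :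
    2 ^ κ < nu ↥A ∧
      ∃ S : Set (↥A → ↥A), (∀ f ∈ S, Monotone f) ∧ IsAntichain (· ≤ ·) S ∧ #S = 2 ^ κ := by
  subst hcard
  have : Infinite A := Cardinal.infinite_iff.2 hκ
  have h : HasAntichain (A →o A) (2 ^ #A) := hA.hasAntichain_orderHom
  exact ⟨lt_nu2_iff.2 h, hasAntichain_orderHom_iff.1 h⟩
end
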